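/- Let 𝔭 be a prime ideal of 𝒪, 𝔡 the different of K, 𝔣 an ideal of 𝒪 which is a power of 𝔭, and ℒ an integral ideal with ord_𝔭(𝔣) ≤ ord_𝔭(ℒ). Let a, d ∈ 𝒪_𝔭 with a𝒪_𝔭 and d𝒪_𝔭 coprime to 𝔭𝒪_𝔭, and let c̃ℒ̃𝔡̃ ∈ ℒ𝔡𝒪_𝔭 be the lower-left entry of a matrix in W_𝔭(ℒ). Suppose r₀, r₁ ∈ 𝔣⁻¹𝔡⁻¹ and r⁰, r¹ ∈ 𝔣⁻¹𝔡⁻¹ satisfy: (i) ord_𝔮(rⁱ) ≥ 0 for all primes 𝔮 with ord_𝔮(𝔣𝔡) = 0; (ii) ord_𝔮(rⁱ) ≥ −ord_𝔮(𝔡) for all primes 𝔮 ≠ 𝔭 dividing 𝔡; (iii) a·rᵢ − rⁱ·(d − c̃ℒ̃𝔭𝔡̃𝔭·rᵢ) ∈ 𝔡⁻¹𝒪_𝔭 for i = 0, 1. If r⁰ − r¹ ∈ 𝔡⁻¹, then r₀ − r₁ ∈ 𝔡⁻¹; i.e., the element r′ attached to r is uniquely determined in 𝔣⁻¹𝔡⁻¹/𝔡⁻¹.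 -/

import Mathlib

open NumberField IsDedekindDomain
open scoped nonZeroDivisors

/-!
The relation `E := a * x - X * (d - c * x) ∈ 𝔡⁻¹𝒪_𝔭` says that, modulo `𝔡⁻¹𝒪_𝔭`, `X` is the image of
`x` under the Möbius transformation of `(a, 0; -c, d)`, so that `x` should be recovered as
`d * X / (a + c * X)`.  The point is that the denominator is a unit at `𝔭` when `𝔣 ≠ 1`, which
follows from `(a + c * X) * (d - c * x) = a * d - c * E`: both factors on the left are integral, and
`c * E` lies in the maximal ideal because `c ∈ 𝔣𝔡𝒪_𝔭`.  At a prime that does not divide `𝔣`, the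
lattices `𝔣⁻¹𝔡⁻¹` and `𝔡⁻¹` have the same completion.
-/

section Valuation

variable {A Γ : Type*} [CommRing A] [LinearOrderedCommMonoidWithZero Γ] (V : Valuation A Γ)
  {a d c x y X Y : A} {γ : Γ}

theorem valuation_add_mul_eq_one (ha : V a = 1) (hd : V d = 1) (hcx : V (c * x) ≤ 1)
    (hcX : V (c * X) ≤ 1) (hE : V (c * (a * x - X * (d - c * x))) < 1) :
    V (a + c * X) = 1 := by
  have hprod : V (a + c * X) * V (d - c * x) = 1 := by
    have had : V (a * d) = 1 := by rw [map_mul, ha, hd, one_mul]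
    calc V (a + c * X) * V (d - c * x) = V (a * d - c * (a * x - X * (d - c * x))) := by
          rw [← map_mul]; congr 1; ring
      _ = 1 := by rw [V.map_sub_eq_of_lt_left (hE.trans_eq had.symm), had]
  refine (V.map_add_le ha.le hcX).antisymm ?_
  calc 1 = V (a + c * X) * V (d - c * x) := hprod.symm
    _ ≤ V (a + c * X) := mul_le_of_le_one_right' (V.map_sub_le hd.le hcx)

theorem valuation_sub_le_of_sub_le (ha : V a = 1) (hd : V d = 1) (hcγ : V c * γ < 1)
    (hcx : V (c * x) ≤ 1) (hcy : V (c * y) ≤ 1) (hcX : V (c * X) ≤ 1)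
    (hx : V (a * x - X * (d - c * x)) ≤ γ) (hy : V (a * y - Y * (d - c * y)) ≤ γ)
    (hXY : V (X - Y) ≤ γ) : V (x - y) ≤ γ := by
  have hunit : V (a + c * X) = 1 := by
    refine valuation_add_mul_eq_one V ha hd hcx hcX (lt_of_le_of_lt ?_ hcγ)
    rw [map_mul]
    gcongr
  have hdy : V ((d - c * y) * (X - Y)) ≤ γ := by
    rw [map_mul]
    exact (mul_le_of_le_one_left' (V.map_sub_le hd.le hcy)).trans hXY
  calc V (x - y) = V ((a + c * X) * (x - y)) := by rw [map_mul, hunit, one_mul]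
    _ = V (a * x - X * (d - c * x) - (a * y - Y * (d - c * y)) + (d - c * y) * (X - Y)) := by
      congr 1; ring
    _ ≤ γ := V.map_add_le (V.map_sub_le hx hy) hdy

end Valuation

section DedekindDomain

variable {R : Type*} [CommRing R] [IsDedekindDomain R]

theorem exists_mem_forall_intValuation_le (v : HeightOneSpectrum R) {I : Ideal R} (hI : I ≠ ⊥) :
    ∃ g ∈ I, g ≠ 0 ∧ ∀ y ∈ I, v.intValuation y ≤ v.intValuation g := by
  obtain ⟨g, ⟨hgI, hg0⟩, hmin⟩ := exists_minimalFor_of_wellFoundedLT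
    (fun y ↦ y ∈ I ∧ y ≠ 0) (fun y ↦ multiplicity v.asIdeal (Ideal.span {y}))
    (Submodule.exists_mem_ne_zero_of_ne_bot hI)
  refine ⟨g, hgI, hg0, fun y hy ↦ ?_⟩
  obtain rfl | hy0 := eq_or_ne y 0
  · simp only [map_zero, zero_le]
  · rw [v.intValuation_eq_exp_neg_multiplicity hy0, v.intValuation_eq_exp_neg_multiplicity hg0,
      WithZero.exp_le_exp, neg_le_neg_iff, Nat.cast_le]
    exact (le_total _ _).elim id (hmin ⟨hy, hy0⟩)

theorem intValuation_lt_of_mem_asIdeal_mul {v : HeightOneSpectrum R} {I : Ideal R} {g t : R}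
    (hg0 : g ≠ 0) (hg : ∀ y ∈ I, v.intValuation y ≤ v.intValuation g) (ht : t ∈ v.asIdeal * I) :
    v.intValuation t < v.intValuation g := by
  induction ht using Submodule.mul_induction_on' with
  | mem_mul_mem p hp y hy =>
    rw [map_mul]
    calc v.intValuation p * v.intValuation y ≤ v.intValuation p * v.intValuation g := by
          gcongr; exact hg y hy
      _ < v.intValuation g :=
        mul_lt_of_lt_one_left (zero_lt_iff.mpr (v.intValuation_ne_zero g hg0))
          ((v.intValuation_lt_one_iff_mem p).mpr hp)
  | add s _ t _ hs ht => exact v.intValuation.map_add_lt hs ht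

-- The completion of `I⁻¹` at `v` is the ball of radius `γ`.
theorem exists_le_iff_forall_mul_intValuation_le_one (v : HeightOneSpectrum R) {I : Ideal R}
    (hI : I ≠ ⊥) :
    ∃ γ : WithZero (Multiplicative ℤ), (∀ s, s ≤ γ ↔ ∀ y ∈ I, s * v.intValuation y ≤ 1) ∧
      ∀ t ∈ v.asIdeal * I, v.intValuation t * γ < 1 := by
  obtain ⟨g, hgI, hg0, hg⟩ := exists_mem_forall_intValuation_le v hI
  have hpos : 0 < v.intValuation g := zero_lt_iff.mpr (v.intValuation_ne_zero g hg0)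
  refine ⟨1 / v.intValuation g, fun s ↦ ?_, fun t ht ↦ ?_⟩
  · rw [le_div_iff₀ hpos]
    exact ⟨fun hs y hy ↦ (mul_le_mul_right (hg y hy) s).trans hs, fun hs ↦ hs g hgI⟩
  · rw [mul_one_div, div_lt_one₀ hpos]
    exact intValuation_lt_of_mem_asIdeal_mul hg0 hg ht

variable {K : Type*} [Field K] [Algebra R K] [IsFractionRing R K] {v w : HeightOneSpectrum R}

theorem mem_inv_coeIdeal_iff_forall_valuation_le_one {I : Ideal R} (hI : I ≠ ⊥) {x : K} :
    x ∈ (I : FractionalIdeal R⁰ K)⁻¹ ↔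
      ∀ w : HeightOneSpectrum R, ∀ y ∈ I, w.valuation K (x * algebraMap R K y) ≤ 1 := by
  rw [FractionalIdeal.mem_inv_iff (FractionalIdeal.coeIdeal_ne_zero.mpr hI)]
  constructor
  · intro h w y hy
    obtain ⟨z, hz⟩ := (FractionalIdeal.mem_one_iff R⁰).mp
      (h _ (FractionalIdeal.mem_coeIdeal_of_mem R⁰ hy))
    rw [← hz]
    exact w.valuation_le_one z
  · intro h _ hyI
    obtain ⟨y, hy, rfl⟩ := (FractionalIdeal.mem_coeIdeal R⁰).mp hyI
    exact (FractionalIdeal.mem_one_iff R⁰).mpr <|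
      HeightOneSpectrum.mem_integers_of_valuation_le_one K _ fun w ↦ h w y hy

theorem valuation_mul_le_one_of_not_le {J I : Ideal R} {x : K} (hJ : ¬ J ≤ w.asIdeal)
    (hx : ∀ t ∈ J * I, w.valuation K (x * algebraMap R K t) ≤ 1) {y : R} (hy : y ∈ I) :
    w.valuation K (x * algebraMap R K y) ≤ 1 := by
  obtain ⟨s, hsJ, hsw⟩ := SetLike.not_le_iff_exists.mp hJ
  calc w.valuation K (x * algebraMap R K y)
      = w.valuation K (algebraMap R K s) * w.valuation K (x * algebraMap R K y) := by
        rw [(w.valuation_eq_one_iff_notMem).mpr hsw, one_mul]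
    _ = w.valuation K (x * algebraMap R K (s * y)) := by
        rw [← map_mul, map_mul (algebraMap R K), mul_left_comm]
    _ ≤ 1 := hx _ (Ideal.mul_mem_mul hsJ hy)

theorem valuation_sub_mul_le_one_of_le {J D : Ideal R} (hJ : J ≤ v.asIdeal) (hD : D ≠ ⊥)
    {a d c : v.adicCompletion K} (ha : Valued.v a = 1) (hd : Valued.v d = 1)
    (hc : ∃ t ∈ J * D, Valued.v c ≤ Valued.v ((algebraMap R K t : K) : v.adicCompletion K))
    {x y X Y : K}
    (hx : ∀ t ∈ J * D, v.valuation K (x * algebraMap R K t) ≤ 1)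
    (hy : ∀ t ∈ J * D, v.valuation K (y * algebraMap R K t) ≤ 1)
    (hX : ∀ t ∈ J * D, v.valuation K (X * algebraMap R K t) ≤ 1)
    (hxX : ∀ z ∈ D, Valued.v ((a * (x : v.adicCompletion K) - X * (d - c * x)) *
      (algebraMap R K z : K)) ≤ 1)
    (hyY : ∀ z ∈ D, Valued.v ((a * (y : v.adicCompletion K) - Y * (d - c * y)) *
      (algebraMap R K z : K)) ≤ 1)
    (hXY : ∀ z ∈ D, v.valuation K ((X - Y) * algebraMap R K z) ≤ 1) {z : R} (hz : z ∈ D) :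
    v.valuation K ((x - y) * algebraMap R K z) ≤ 1 := by
  obtain ⟨γ, hγ, hγ_lt⟩ := exists_le_iff_forall_mul_intValuation_le_one v hD
  obtain ⟨t, ht, hct⟩ := hc
  have hval (r : K) : Valued.v (r : v.adicCompletion K) = v.valuation K r :=
    v.valuedAdicCompletion_eq_valuation' r
  have hval_sub (r s : K) :
      Valued.v ((r : v.adicCompletion K) - s) = v.valuation K (r - s) := by
    rw [← hval]
    exact congrArg Valued.v (map_sub (algebraMap K (v.adicCompletion K)) r s).symm
  have hle (r : v.adicCompletion K)
      (hr : ∀ z ∈ D, Valued.v (r * (algebraMap R K z : K)) ≤ 1) : Valued.v r ≤ γ :=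
    (hγ _).mpr fun z hz ↦ by
      simpa only [map_mul, hval, v.valuation_of_algebraMap] using hr z hz
  have hc_mul (r : K) (hr : ∀ t ∈ J * D, v.valuation K (r * algebraMap R K t) ≤ 1) :
      Valued.v (c * r) ≤ 1 := by
    calc Valued.v (c * r) = Valued.v c * v.valuation K r := by rw [map_mul, hval]
      _ ≤ v.valuation K (algebraMap R K t) * v.valuation K r := by
        gcongr; exact hct.trans_eq (hval _)
      _ = v.valuation K (r * algebraMap R K t) := by rw [map_mul, mul_comm]
      _ ≤ 1 := hr t ht
  have hcγ : Valued.v c * γ < 1 := by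
    calc Valued.v c * γ ≤ v.intValuation t * γ := by
          gcongr; rwa [hval, v.valuation_of_algebraMap] at hct
      _ < 1 := hγ_lt t (Ideal.mul_mono_left hJ ht)
  have hXYγ : v.valuation K (X - Y) ≤ γ :=
    (hγ _).mpr fun z hz ↦ by simpa only [map_mul, v.valuation_of_algebraMap] using hXY z hz
  have hxyγ : v.valuation K (x - y) ≤ γ := by
    rw [← hval_sub] at hXYγ ⊢
    exact valuation_sub_le_of_sub_le Valued.v ha hd hcγ (hc_mul x hx) (hc_mul y hy) (hc_mul X hX)
      (hle _ hxX) (hle _ hyY) hXYγ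
  rw [map_mul, v.valuation_of_algebraMap]
  exact (hγ _).mp hxyγ z hz

theorem rprime_unique_mod_inv_different_general {v : HeightOneSpectrum R} {D : Ideal R}
    (hD : D ≠ ⊥) {e : ℕ} {a d c : v.adicCompletion K}
    (ha : Valued.v a = 1) (hd : Valued.v d = 1)
    (hc : ∃ t ∈ v.asIdeal ^ e * D,
      Valued.v c ≤ Valued.v ((algebraMap R K t : K) : v.adicCompletion K))
    {r0 r1 R0 R1 : K}
    (hr0 : r0 ∈ ((v.asIdeal ^ e * D : Ideal R) : FractionalIdeal R⁰ K)⁻¹)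
    (hr1 : r1 ∈ ((v.asIdeal ^ e * D : Ideal R) : FractionalIdeal R⁰ K)⁻¹)
    (hR0 : R0 ∈ ((v.asIdeal ^ e * D : Ideal R) : FractionalIdeal R⁰ K)⁻¹)
    (hrR0 : ∀ z ∈ D, Valued.v ((a * (r0 : v.adicCompletion K) - R0 * (d - c * r0)) *
      (algebraMap R K z : K)) ≤ 1)
    (hrR1 : ∀ z ∈ D, Valued.v ((a * (r1 : v.adicCompletion K) - R1 * (d - c * r1)) *
      (algebraMap R K z : K)) ≤ 1)
    (hR : R0 - R1 ∈ (D : FractionalIdeal R⁰ K)⁻¹) :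
    r0 - r1 ∈ (D : FractionalIdeal R⁰ K)⁻¹ := by
  have hfD : v.asIdeal ^ e * D ≠ ⊥ := mul_ne_zero (pow_ne_zero e v.ne_bot) hD
  rw [mem_inv_coeIdeal_iff_forall_valuation_le_one hfD] at hr0 hr1 hR0
  rw [mem_inv_coeIdeal_iff_forall_valuation_le_one hD] at hR ⊢
  intro w z hz
  by_cases hw : v.asIdeal ^ e ≤ w.asIdeal
  · obtain rfl : v = w := HeightOneSpectrum.ext <|
      v.isMaximal.eq_of_le w.isPrime.ne_top (w.isPrime.le_of_pow_le hw)
    exact valuation_sub_mul_le_one_of_le hw hD ha hd hc (hr0 v) (hr1 v) (hR0 v) hrR0 hrR1 (hR v) hz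
  · rw [sub_mul]
    exact (w.valuation K).map_sub_le (valuation_mul_le_one_of_not_le hw (hr0 w) hz)
      (valuation_mul_le_one_of_not_le hw (hr1 w) hz)

end DedekindDomain

/-- uniqueness of the approximating element `r′` in the proof of the
level-bound proposition.  Let `𝔭` be a (nonzero) prime of `𝒪` (a point `v` of the height
one spectrum), `𝔡` the different of `K`, `𝔣 = 𝔭^e` a power of `𝔭`, and `ℒ` an integral
ideal with `ord_𝔭 𝔣 ≤ ord_𝔭 ℒ` (equivalently `𝔭^e ∣ ℒ`).  Let `a, d` be elements of the
completion `𝒪_𝔭` whose associated ideals are coprime to `𝔭𝒪_𝔭` (i.e. of valuation `1`),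
and let `c` be an element of `ℒ𝔡𝒪_𝔭` (the lower-left entry of a matrix of `W_𝔭(ℒ)`).
Suppose `r₀, r₁ ∈ 𝔣⁻¹𝔡⁻¹` and `r⁰, r¹ ∈ 𝔣⁻¹𝔡⁻¹` satisfy:
(i)  `ord_𝔮(rⁱ) ≥ 0` for all primes `𝔮` with `ord_𝔮(𝔣𝔡) = 0`;
(ii) `rⁱ ∈ 𝔡⁻¹𝒪_𝔮` for all primes `𝔮 ≠ 𝔭` dividing `𝔡`;
(iii) `a·rᵢ − rⁱ·(d − c·rᵢ) ∈ 𝔡⁻¹𝒪_𝔭` for `i = 0, 1`.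
If `r⁰ − r¹ ∈ 𝔡⁻¹` then `r₀ − r₁ ∈ 𝔡⁻¹`; i.e. the element `r′` attached to `r` is
uniquely determined in `𝔣⁻¹𝔡⁻¹/𝔡⁻¹`. -/
theorem rprime_unique_mod_inv_different
    (K : Type*) [Field K] [NumberField K]
    (v : HeightOneSpectrum (𝓞 K))
    (D : Ideal (𝓞 K)) (hD : D = differentIdeal ℤ (𝓞 K))
    (e : ℕ) (L : Ideal (𝓞 K)) (hL : v.asIdeal ^ e ∣ L)
    (a d c : v.adicCompletion K)
    (ha : Valued.v a = (1 : WithZero (Multiplicative ℤ)))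
    (hd : Valued.v d = (1 : WithZero (Multiplicative ℤ)))
    (hc : ∃ t : 𝓞 K, t ∈ L * D ∧
      Valued.v c ≤ Valued.v ((algebraMap (𝓞 K) K t : K) : v.adicCompletion K))
    (r0 r1 R0 R1 : K)
    (hr0 : r0 ∈ (((v.asIdeal ^ e * D : Ideal (𝓞 K)) : FractionalIdeal (𝓞 K)⁰ K))⁻¹)
    (hr1 : r1 ∈ (((v.asIdeal ^ e * D : Ideal (𝓞 K)) : FractionalIdeal (𝓞 K)⁰ K))⁻¹)
    (hR0 : R0 ∈ (((v.asIdeal ^ e * D : Ideal (𝓞 K)) : FractionalIdeal (𝓞 K)⁰ K))⁻¹)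
    (hR1 : R1 ∈ (((v.asIdeal ^ e * D : Ideal (𝓞 K)) : FractionalIdeal (𝓞 K)⁰ K))⁻¹)
    -- condition (i) for r⁰ and r¹
    (hi0 : ∀ w : HeightOneSpectrum (𝓞 K), ¬ w.asIdeal ∣ v.asIdeal ^ e * D →
      w.valuation K R0 ≤ 1)
    (hi1 : ∀ w : HeightOneSpectrum (𝓞 K), ¬ w.asIdeal ∣ v.asIdeal ^ e * D →
      w.valuation K R1 ≤ 1)
    -- condition (ii) for r⁰ and r¹
    (hii0 : ∀ w : HeightOneSpectrum (𝓞 K), w ≠ v → w.asIdeal ∣ D →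
      ∀ y : 𝓞 K, y ∈ D → w.valuation K (R0 * (algebraMap (𝓞 K) K y)) ≤ 1)
    (hii1 : ∀ w : HeightOneSpectrum (𝓞 K), w ≠ v → w.asIdeal ∣ D →
      ∀ y : 𝓞 K, y ∈ D → w.valuation K (R1 * (algebraMap (𝓞 K) K y)) ≤ 1)
    -- condition (iii) for the pairs (r₀, r⁰) and (r₁, r¹)
    (hiii0 : ∀ y : 𝓞 K, y ∈ D →
      Valued.v ((a * (r0 : v.adicCompletion K)
          - (R0 : v.adicCompletion K) * (d - c * (r0 : v.adicCompletion K)))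
        * ((algebraMap (𝓞 K) K y : K) : v.adicCompletion K)) ≤ 1)
    (hiii1 : ∀ y : 𝓞 K, y ∈ D →
      Valued.v ((a * (r1 : v.adicCompletion K)
          - (R1 : v.adicCompletion K) * (d - c * (r1 : v.adicCompletion K)))
        * ((algebraMap (𝓞 K) K y : K) : v.adicCompletion K)) ≤ 1)
    (h : R0 - R1 ∈ ((D : FractionalIdeal (𝓞 K)⁰ K))⁻¹) :
    r0 - r1 ∈ ((D : FractionalIdeal (𝓞 K)⁰ K))⁻¹ := by
  have hc' := hc.imp fun t ↦ And.imp_left fun ht ↦ Ideal.mul_mono_left (Ideal.le_of_dvd hL) ht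
  exact rprime_unique_mod_inv_different_general (hD ▸ differentIdeal_ne_bot) ha hd hc'
    hr0 hr1 hR0 hiii0 hiii1 h
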